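/- Let n ≥ 2, let Ω be a nonempty open connected subset of ℝⁿ, and let u : Ω → ℝ be locally Lipschitz on Ω with zero set Z_u = {x ∈ Ω : u(x) = 0}, where Z_u is neither empty nor all of Ω. Then for every point a ∈ Ω lying on the topological frontier of Z_u and every open neighborhood U of a with U ⊆ Ω, the lower Lebesgue integral ∫_{U∖Z_u} (‖fderiv u x‖ / |u(x)|)ⁿ dv is infinite. -/

import Mathlib

/-!
The argument works ray by ray from `a`. Suppose the integral is finite, and let `u` be `K`-Lipschitz
on a small ball around `a`, where `u a = 0`. In polar coordinates (`lintegral_polar`), for almost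
every direction `θ` the function `φ t = u (a + t θ)` satisfies `∫ t ^ (n - 1) |φ' / φ| ^ n dt < ∞`,
where the integrand is `0` at the zeros of `φ`.

Such a `φ` must vanish (`eq_zero_on_ray`). If `φ r ≠ 0`, let `s < r` be the last zero of `φ`
before `r`. The inequality `x ≤ 1 / (2 t) + 2 ^ (n - 1) t ^ (n - 1) x ^ n` for `x = |φ' / φ|`,
integrated over `[s + δ, r]`, gives
`log |φ r| - log |φ (s + δ)| ≤ (1 / 2) log (r / (s + δ)) + C ≤ (1 / 2) log (r / δ) + C`.
Since `|φ (s + δ)| ≤ K δ`, this bounds `log |φ r|` by `(1 / 2) log δ + C'`, which tends to `-∞` as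
`δ → 0`.

Hence `u = 0` on almost every ray near `a`, so by continuity on a whole ball around `a`
(`eq_zero_on_ball`), and `a` is interior to the zero set rather than on its frontier.
-/

open MeasureTheory

lemma lipschitzOn_log_of_le {φ : ℝ → ℝ} {K : NNReal} (hφ : LipschitzWith K φ) {s : Set ℝ} {m : ℝ}
    (hm : 0 < m) (hs : ∀ t ∈ s, m ≤ |φ t|) :
    LipschitzOnWith (K * m⁻¹.toNNReal) (fun t => Real.log (φ t)) s := by
  have key : ∀ x ∈ s, ∀ y ∈ s, Real.log (φ x) - Real.log (φ y) ≤ K * m⁻¹ * |x - y| := by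
    intro x hx y hy
    have hx0 : 0 < |φ x| := hm.trans_le (hs x hx)
    have hy0 : 0 < |φ y| := hm.trans_le (hs y hy)
    have hL : |φ x - φ y| ≤ K * |x - y| := by
      simpa [Real.dist_eq] using hφ.dist_le_mul x y
    rw [← Real.log_abs (φ x), ← Real.log_abs (φ y), ← Real.log_div hx0.ne' hy0.ne']
    calc Real.log (|φ x| / |φ y|) ≤ |φ x| / |φ y| - 1 := Real.log_le_sub_one_of_pos (by positivity)
      _ = (|φ x| - |φ y|) * |φ y|⁻¹ := by field_simp
      _ ≤ (K * |x - y|) * m⁻¹ := by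
        have h1 : |φ x| - |φ y| ≤ K * |x - y| := (abs_sub_abs_le_abs_sub _ _).trans hL
        have h2 : |φ y|⁻¹ ≤ m⁻¹ := by
          gcongr
          exact hs y hy
        exact mul_le_mul h1 h2 (by positivity) (by positivity)
      _ = _ := by ring
  refine LipschitzOnWith.of_dist_le_mul fun x hx y hy => ?_
  have hmi : ((m⁻¹.toNNReal : NNReal) : ℝ) = m⁻¹ := Real.coe_toNNReal _ (by positivity)
  rw [NNReal.coe_mul, hmi, Real.dist_eq, Real.dist_eq, abs_le]
  have h1 := key x hx y hy
  have h2 := key y hy x hx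
  rw [abs_sub_comm y x] at h2
  constructor <;> linarith

/-- The case `ε = 1 / 2` of the Young-type inequality `y ≤ ε + ε ^ (1 - n) * y ^ n`, applied to
`y = t * x` and divided by `t`. -/
lemma le_inv_add_pow {n : ℕ} (hn : 1 ≤ n) {t x : ℝ} (ht : 0 < t) (hx : 0 ≤ x) :
    x ≤ 2⁻¹ * t⁻¹ + 2 ^ (n - 1) * (t ^ (n - 1) * x ^ n) := by
  obtain ⟨k, rfl⟩ : ∃ k, n = k + 1 := ⟨n - 1, by omega⟩
  simp only [Nat.add_sub_cancel]
  have hpos : 0 ≤ 2 ^ k * (t ^ k * x ^ (k + 1)) := by positivity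
  rcases le_total (2 * (t * x)) 1 with h | h
  · have : x ≤ 2⁻¹ * t⁻¹ := by
      rw [← mul_inv, ← one_div, le_div_iff₀ (by positivity)]
      linarith
    linarith
  · have h1 : 1 ≤ (2 * (t * x)) ^ k := one_le_pow₀ h
    have h2 : 2 ^ k * (t ^ k * x ^ (k + 1)) = (2 * (t * x)) ^ k * x := by
      rw [mul_pow, mul_pow]; ring
    have h3 : 0 ≤ 2⁻¹ * t⁻¹ := by positivity
    nlinarith

/-- One-dimensional core: a Lipschitz function vanishing at the origin whose logarithmic
derivative has finite `n`-energy on `(0, R)` for the weight `t ^ (n - 1)` vanishes on `(0, R)`. -/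
lemma eq_zero_on_ray {n : ℕ} (hn : 1 ≤ n) {φ g : ℝ → ℝ} {K : NNReal} (hφ : LipschitzWith K φ)
    (h0 : φ 0 = 0) {R : ℝ} (hgm : Measurable g) (hg0 : ∀ t, 0 ≤ g t)
    (hg : ∀ᵐ t, t ∈ Set.Ioo 0 R → |deriv φ t| ≤ g t)
    (hfin : ∫⁻ t in Set.Ioo 0 R, ENNReal.ofReal (t ^ (n - 1) * (g t / |φ t|) ^ n) ≠ ⊤)
    {r : ℝ} (hr : r ∈ Set.Ioo 0 R) : φ r = 0 := by
  by_contra hne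
  have hφc := hφ.continuous
  -- `s` is the last zero of `φ` before `r`
  obtain ⟨s, ⟨⟨hs0, hsr⟩, hφs⟩, hmax⟩ : ∃ s ∈ Set.Icc 0 r ∩ φ ⁻¹' {0},
      ∀ t ∈ Set.Icc 0 r ∩ φ ⁻¹' {0}, t ≤ s := by
    have hc : IsCompact (Set.Icc 0 r ∩ φ ⁻¹' {0}) :=
      isCompact_Icc.inter_right (isClosed_singleton.preimage hφc)
    obtain ⟨s, hs, hsm⟩ := hc.exists_isGreatest ⟨0, ⟨le_rfl, hr.1.le⟩, h0⟩
    exact ⟨s, hs, fun t ht => hsm ht⟩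
  have hφs : φ s = 0 := hφs
  have hsr : s < r := lt_of_le_of_ne hsr (by rintro rfl; exact hne hφs)
  have hnz : ∀ t ∈ Set.Ioc s r, φ t ≠ 0 := fun t ht h =>
    absurd (hmax t ⟨⟨hs0.trans ht.1.le, ht.2⟩, h⟩) (not_le.2 ht.1)
  set F : ℝ → ℝ := fun t => t ^ (n - 1) * (g t / |φ t|) ^ n with hF
  have hFm : Measurable F := by
    have := hφc.measurable
    simp only [hF, ← Real.norm_eq_abs]
    fun_prop
  have hF0 : ∀ t ∈ Set.Ioo 0 R, 0 ≤ F t := fun t ht =>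
    mul_nonneg (pow_nonneg ht.1.le _) (pow_nonneg (div_nonneg (hg0 t) (abs_nonneg _)) _)
  have hFae : 0 ≤ᵐ[volume.restrict (Set.Ioo 0 R)] F := by
    filter_upwards [ae_restrict_mem measurableSet_Ioo] with t ht using hF0 t ht
  have hFi : IntegrableOn F (Set.Ioo 0 R) :=
    (lintegral_ofReal_ne_top_iff_integrable hFm.aestronglyMeasurable hFae).1 hfin
  set M := ∫ t in Set.Ioo 0 R, F t
  have key : ∀ δ, 0 < δ → δ < r - s →
      Real.log |φ r| ≤ Real.log (K + 1) + 2⁻¹ * Real.log δ + 2⁻¹ * Real.log r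
        + 2 ^ (n - 1) * M := by
    intro δ hδ hδr
    set c := s + δ with hc
    have hcpos : 0 < c := by linarith
    have hcr : c < r := by linarith
    have hsub : Set.Icc c r ⊆ Set.Ioc s r := fun t ht => ⟨by linarith [ht.1], ht.2⟩
    obtain ⟨m, hm, hmle⟩ : ∃ m, 0 < m ∧ ∀ t ∈ Set.Icc c r, m ≤ |φ t| := by
      obtain ⟨t₀, ht₀, hmin⟩ := isCompact_Icc.exists_isMinOn (Set.nonempty_Icc.2 hcr.le)
        (hφc.abs.continuousOn (s := Set.Icc c r))
      exact ⟨|φ t₀|, abs_pos.2 (hnz t₀ (hsub ht₀)), fun t ht => hmin ht⟩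
    have hac : AbsolutelyContinuousOnInterval (fun t => Real.log (φ t)) c r := by
      apply LipschitzOnWith.absolutelyContinuousOnInterval
        (K := K * m⁻¹.toNNReal)
      rw [Set.uIcc_of_le hcr.le]
      exact lipschitzOn_log_of_le hφ hm hmle
    have hIoc : Set.Ioc c r ⊆ Set.Ioo 0 R := fun t ht =>
      ⟨hcpos.trans ht.1, ht.2.trans_lt hr.2⟩
    have hFi' : IntervalIntegrable F volume c r := by
      rw [intervalIntegrable_iff_integrableOn_Ioc_of_le hcr.le]
      exact hFi.mono_set hIoc
    have hinv : IntervalIntegrable (fun t : ℝ => t⁻¹) volume c r := by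
      refine intervalIntegrable_inv_iff.2 ?_
      right
      rw [Set.uIcc_of_le hcr.le]
      exact fun h => absurd h.1 (not_le.2 hcpos)
    have hle : ∫ t in c..r, deriv (fun t => Real.log (φ t)) t ≤
        ∫ t in c..r, (2⁻¹ * t⁻¹ + 2 ^ (n - 1) * F t) := by
      apply intervalIntegral.integral_mono_ae_restrict hcr.le hac.intervalIntegrable_deriv
        ((hinv.const_mul _).add (hFi'.const_mul _))
      filter_upwards [ae_restrict_mem measurableSet_Icc, ae_restrict_of_ae hg,
        ae_restrict_of_ae hφ.ae_differentiableAt_real] with t ht hgt hdt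
      have ht' : t ∈ Set.Ioo 0 R := ⟨hcpos.trans_le ht.1, ht.2.trans_lt hr.2⟩
      have hd : deriv (fun t => Real.log (φ t)) t = deriv φ t / φ t :=
        (hdt.hasDerivAt.log (hnz t (hsub ht))).deriv
      rw [hd]
      calc deriv φ t / φ t ≤ |deriv φ t / φ t| := le_abs_self _
        _ = |deriv φ t| / |φ t| := abs_div _ _
        _ ≤ g t / |φ t| := by gcongr; exact hgt ht'
        _ ≤ _ := le_inv_add_pow hn ht'.1 (div_nonneg (hg0 t) (abs_nonneg _))
    rw [hac.integral_deriv_eq_sub, intervalIntegral.integral_add (hinv.const_mul _)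
      (hFi'.const_mul _), intervalIntegral.integral_const_mul, intervalIntegral.integral_const_mul,
      integral_inv_of_pos hcpos hr.1, Real.log_div hr.1.ne' hcpos.ne'] at hle
    have hFM : ∫ t in c..r, F t ≤ M := by
      rw [intervalIntegral.integral_of_le hcr.le]
      exact setIntegral_mono_set hFi hFae hIoc.eventuallyLE
    have hFM' : 2 ^ (n - 1) * ∫ t in c..r, F t ≤ 2 ^ (n - 1) * M := by gcongr
    have hlogc : Real.log δ ≤ Real.log c := Real.log_le_log hδ (by linarith)
    have hφδ : Real.log (φ c) ≤ Real.log (K + 1) + Real.log δ := by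
      have h1 : |φ c| ≤ K * δ := by
        have := hφ.dist_le_mul c s
        rw [Real.dist_eq, Real.dist_eq, hφs, hc] at this
        simpa [abs_of_pos hδ] using this
      have hK : (0 : ℝ) ≤ K := K.2
      rw [← Real.log_abs, ← Real.log_mul (by positivity) hδ.ne']
      exact Real.log_le_log (abs_pos.2 (hnz c ⟨by linarith, hcr.le⟩)) (by nlinarith)
    rw [Real.log_abs]
    linarith
  -- the right-hand side of `key` tends to `-∞` as `δ → 0`
  set D := Real.log |φ r| - Real.log (K + 1) - 2⁻¹ * Real.log r - 2 ^ (n - 1) * M with hD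
  have hδ0 : 0 < min ((r - s) / 2) (Real.exp (2 * D - 1)) :=
    lt_min (by linarith) (Real.exp_pos _)
  have h1 := key _ hδ0 ((min_le_left _ _).trans_lt (by linarith))
  have h2 := Real.log_le_log hδ0 (min_le_right _ _)
  rw [Real.log_exp] at h2
  linarith

/-- Integration in polar coordinates for nonnegative functions. -/
lemma lintegral_polar {E : Type*} [NormedAddCommGroup E] [NormedSpace ℝ E] [MeasurableSpace E]
    [BorelSpace E] [FiniteDimensional ℝ E] [Nontrivial E] (μ : Measure E) [μ.IsAddHaarMeasure]
    {f : E → ENNReal} (hf : Measurable f) :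
    ∫⁻ x, f x ∂μ = ∫⁻ θ : Metric.sphere (0 : E) 1, (∫⁻ r in Set.Ioi (0 : ℝ),
      ENNReal.ofReal (r ^ (Module.finrank ℝ E - 1)) * f (r • (θ : E))) ∂μ.toSphere := by
  have hm : Measurable fun p : Metric.sphere (0 : E) 1 × Set.Ioi (0 : ℝ) =>
      f ((p.2 : ℝ) • (p.1 : E)) := by fun_prop
  calc ∫⁻ x, f x ∂μ = ∫⁻ x : ({0}ᶜ : Set E), f x ∂(μ.comap (↑)) := by
        rw [lintegral_subtype_comap (measurableSet_singleton _).compl f,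
          restrict_compl_singleton]
    _ = ∫⁻ p, f ((p.2 : ℝ) • (p.1 : E))
          ∂μ.toSphere.prod (.volumeIoiPow (Module.finrank ℝ E - 1)) := by
        rw [← μ.measurePreserving_homeomorphUnitSphereProd.lintegral_comp hm]
        refine lintegral_congr fun x => ?_
        have hx : ‖(x : E)‖ ≠ 0 := norm_ne_zero_iff.2 x.2
        simp [smul_smul, hx]
    _ = _ := by
        rw [lintegral_prod _ hm.aemeasurable]
        refine lintegral_congr fun θ => ?_
        rw [Measure.volumeIoiPow, lintegral_withDensity_eq_lintegral_mul _ (by fun_prop)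
          (by fun_prop)]
        exact lintegral_subtype_comap measurableSet_Ioi
          fun r : ℝ => ENNReal.ofReal (r ^ (Module.finrank ℝ E - 1)) * f (r • (θ : E))

/-- A Lipschitz function on `ℝⁿ` that vanishes at the origin and whose logarithmic gradient
has finite `n`-energy on a ball around the origin vanishes on that ball. -/
lemma eq_zero_on_ball {n : ℕ} (hn : 1 ≤ n) {v : EuclideanSpace ℝ (Fin n) → ℝ} {K : NNReal}
    (hv : LipschitzWith K v) (h0 : v 0 = 0) {R : ℝ}
    (hfin : ∫⁻ x in Metric.ball 0 R, ENNReal.ofReal ((‖fderiv ℝ v x‖ / |v x|) ^ n) ≠ ⊤)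
    {x : EuclideanSpace ℝ (Fin n)} (hx : x ∈ Metric.ball 0 R) : v x = 0 := by
  have : Nonempty (Fin n) := ⟨⟨0, hn⟩⟩
  have hvm : Measurable v := hv.continuous.measurable
  have hfm : Measurable (fderiv ℝ v) := measurable_fderiv ℝ v
  set G : EuclideanSpace ℝ (Fin n) → ENNReal :=
    fun x => ENNReal.ofReal ((‖fderiv ℝ v x‖ / |v x|) ^ n) with hG
  have hGm : Measurable G := by
    simp only [hG, ← Real.norm_eq_abs]
    fun_prop
  -- almost every ray carries finite weighted energy
  have h1 : ∀ᵐ θ : Metric.sphere (0 : EuclideanSpace ℝ (Fin n)) 1 ∂volume.toSphere,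
      ∫⁻ r in Set.Ioi (0 : ℝ), ENNReal.ofReal (r ^ (n - 1)) *
        (Metric.ball 0 R).indicator G (r • (θ : EuclideanSpace ℝ (Fin n))) < ⊤ := by
    have hGi : Measurable ((Metric.ball 0 R).indicator G) := hGm.indicator measurableSet_ball
    have := lintegral_polar volume hGi
    rw [lintegral_indicator measurableSet_ball, finrank_euclideanSpace_fin] at this
    rw [this] at hfin
    refine ae_lt_top ?_ hfin
    apply Measurable.lintegral_prod_right'
      (f := fun p : Metric.sphere (0 : EuclideanSpace ℝ (Fin n)) 1 × ℝ =>
        ENNReal.ofReal (p.2 ^ (n - 1)) *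
        (Metric.ball 0 R).indicator G (p.2 • (p.1 : EuclideanSpace ℝ (Fin n))))
    fun_prop
  -- on almost every ray, `v` is differentiable at almost every point
  have h2 : ∀ᵐ θ : Metric.sphere (0 : EuclideanSpace ℝ (Fin n)) 1 ∂volume.toSphere,
      ∀ᵐ r : ℝ, r ∈ Set.Ioi (0 : ℝ) →
        DifferentiableAt ℝ v (r • (θ : EuclideanSpace ℝ (Fin n))) := by
    set N := {x | DifferentiableAt ℝ v x}ᶜ with hN
    have hNm : MeasurableSet N := (measurableSet_of_differentiableAt ℝ v).compl
    have hNi : Measurable (N.indicator (1 : EuclideanSpace ℝ (Fin n) → ENNReal)) :=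
      measurable_one.indicator hNm
    have hN0 : volume N = 0 := hv.ae_differentiableAt
    have := lintegral_polar volume hNi
    rw [lintegral_indicator_one hNm, hN0, finrank_euclideanSpace_fin, eq_comm,
      lintegral_eq_zero_iff] at this
    · filter_upwards [this] with θ hθ
      rw [Pi.zero_apply, lintegral_eq_zero_iff (by fun_prop), Filter.EventuallyEq,
        ae_restrict_iff' measurableSet_Ioi] at hθ
      filter_upwards [hθ] with r hr hr0
      by_contra hnd
      have hmem : r • (θ : EuclideanSpace ℝ (Fin n)) ∈ N := hnd
      have hpow : 0 < r ^ (n - 1) := pow_pos hr0 _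
      have := hr hr0
      simp [hmem, hpow.not_ge] at this
    · apply Measurable.lintegral_prod_right'
        (f := fun p : Metric.sphere (0 : EuclideanSpace ℝ (Fin n)) 1 × ℝ =>
          ENNReal.ofReal (p.2 ^ (n - 1)) *
          N.indicator 1 (p.2 • (p.1 : EuclideanSpace ℝ (Fin n))))
      fun_prop
  have h3 : ∀ᵐ θ : Metric.sphere (0 : EuclideanSpace ℝ (Fin n)) 1 ∂volume.toSphere,
      ∀ r ∈ Set.Ioo 0 R, v (r • (θ : EuclideanSpace ℝ (Fin n))) = 0 := by
    filter_upwards [h1, h2] with θ hθ1 hθ2 r hr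
    have hθ : ‖(θ : EuclideanSpace ℝ (Fin n))‖ = 1 := by simp
    have hφ : LipschitzWith K fun t : ℝ => v (t • (θ : EuclideanSpace ℝ (Fin n))) := by
      refine LipschitzWith.of_dist_le_mul fun x y => (hv.dist_le_mul _ _).trans_eq ?_
      rw [dist_eq_norm, ← sub_smul, norm_smul, hθ, mul_one, dist_eq_norm]
    refine eq_zero_on_ray hn (R := R) hφ (by simpa using h0)
      (g := fun t => ‖fderiv ℝ v (t • (θ : EuclideanSpace ℝ (Fin n)))‖) (by fun_prop)
      (fun _ => norm_nonneg _) ?_ ?_ hr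
    · filter_upwards [hθ2] with t ht htR
      have hd : HasDerivAt (fun t : ℝ => t • (θ : EuclideanSpace ℝ (Fin n))) (θ : _) t := by
        simpa using (hasDerivAt_id t).smul_const (θ : EuclideanSpace ℝ (Fin n))
      have := ((ht htR.1).hasFDerivAt.comp_hasDerivAt t hd).deriv
      rw [Function.comp_def] at this
      rw [this]
      simpa [hθ] using (fderiv ℝ v (t • (θ : EuclideanSpace ℝ (Fin n)))).le_opNorm θ
    · refine ((lintegral_mono_set' (μ := volume) (s := Set.Ioo 0 R) (t := Set.Ioi 0)
        (Set.Ioo_subset_Ioi_self.eventuallyLE)).trans_lt hθ1).ne ∘ fun h => ?_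
      rw [← h]
      refine setLIntegral_congr_fun measurableSet_Ioo fun t ht => ?_
      have hmem : t • (θ : EuclideanSpace ℝ (Fin n)) ∈ Metric.ball 0 R := by
        simpa [norm_smul, abs_of_pos ht.1] using ht.2
      simp only [Set.indicator_of_mem hmem, hG]
      rw [ENNReal.ofReal_mul (pow_nonneg ht.1.le _)]
  -- the exceptional directions are negligible, hence the good ones are dense
  rcases eq_or_ne x 0 with rfl | hx0
  · exact h0
  have hxn : 0 < ‖x‖ := norm_pos_iff.2 hx0
  have hdense := Measure.dense_of_ae h3
  have hclosed : IsClosed {θ : Metric.sphere (0 : EuclideanSpace ℝ (Fin n)) 1 |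
      v (‖x‖ • (θ : EuclideanSpace ℝ (Fin n))) = 0} :=
    isClosed_eq (hv.continuous.comp (by fun_prop)) continuous_const
  have hall := hclosed.closure_subset_iff.2
    (fun θ (hθ : ∀ r ∈ Set.Ioo 0 R, v (r • (θ : EuclideanSpace ℝ (Fin n))) = 0) =>
      hθ ‖x‖ ⟨hxn, by simpa using hx⟩)
    (hdense ⟨‖x‖⁻¹ • x, by simp [norm_smul, hxn.ne']⟩)
  simpa [smul_smul, hxn.ne'] using hall

/-- Remark 3.7: under the hypotheses of Theorem 3.6, for every point `a ∈ Ω` on the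
frontier of the zero set `Z_u` and every open neighborhood `U ⊆ Ω` of `a`,
`∫_{U∖Z_u} (|∇u|/|u|)ⁿ dv = ∞`. -/
theorem divergence_near_frontier_point (n : ℕ) (hn : 2 ≤ n)
    (Ω : Set (EuclideanSpace ℝ (Fin n))) (hΩopen : IsOpen Ω) (hΩconn : IsConnected Ω)
    (u : EuclideanSpace ℝ (Fin n) → ℝ)
    (hLip : ∀ x ∈ Ω, ∃ (K : NNReal) (t : Set (EuclideanSpace ℝ (Fin n))),
      t ∈ nhds x ∧ t ⊆ Ω ∧ LipschitzOnWith K u t)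
    (hZne : {x ∈ Ω | u x = 0} ≠ ∅) (hZprop : {x ∈ Ω | u x = 0} ≠ Ω)
    (a : EuclideanSpace ℝ (Fin n)) (haΩ : a ∈ Ω)
    (haF : a ∈ frontier {x ∈ Ω | u x = 0})
    (U : Set (EuclideanSpace ℝ (Fin n))) (hUopen : IsOpen U) (haU : a ∈ U)
    (hUΩ : U ⊆ Ω) :
    ∫⁻ x in U \ {x ∈ Ω | u x = 0},
      ENNReal.ofReal ((‖fderiv ℝ u x‖ / |u x|) ^ n) = ⊤ := by
  by_contra hfin
  obtain ⟨K, t, ht, -, hKt⟩ := hLip a haΩ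
  obtain ⟨R, hR, hball⟩ := Metric.mem_nhds_iff.1 (Filter.inter_mem ht (hUopen.mem_nhds haU))
  obtain ⟨w, hw, huw⟩ := hKt.extend_real
  have huw' : ∀ x ∈ Metric.ball a R, u x = w x := fun x hx => huw (hball hx).1
  have hae : a ∈ Metric.ball a R := Metric.mem_ball_self hR
  have hua : u a = 0 := by
    have hc : ContinuousAt u a := hKt.continuousOn.continuousAt ht
    by_contra hne
    have hev : ∀ᶠ y in nhds a, y ∉ {x ∈ Ω | u x = 0} :=
      (hc.eventually_ne hne).mono fun y hy h => hy h.2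
    obtain ⟨y, hy, hy'⟩ := mem_closure_iff_frequently.1 haF.1 |>.and_eventually hev |>.exists
    exact hy' hy
  set v : EuclideanSpace ℝ (Fin n) → ℝ := fun x => w (a + x) with hv
  have hvL : LipschitzWith K v := by
    refine LipschitzWith.of_dist_le_mul fun x y => ?_
    simpa using hw.dist_le_mul (a + x) (a + y)
  -- on the zero set the integrand is `(_ / 0) ^ n = 0`, so removing that set changes nothing
  have hvfin : ∫⁻ x in Metric.ball 0 R, ENNReal.ofReal ((‖fderiv ℝ v x‖ / |v x|) ^ n) ≠ ⊤ := by
    have e1 : ∫⁻ x in Metric.ball 0 R, ENNReal.ofReal ((‖fderiv ℝ v x‖ / |v x|) ^ n) =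
        ∫⁻ x in Metric.ball a R, ENNReal.ofReal ((‖fderiv ℝ u x‖ / |u x|) ^ n) := by
      rw [← lintegral_indicator measurableSet_ball, ← lintegral_indicator measurableSet_ball,
        ← lintegral_add_left_eq_self ((Metric.ball a R).indicator _) a]
      refine lintegral_congr fun x => ?_
      by_cases hx : x ∈ Metric.ball 0 R
      · have hax : a + x ∈ Metric.ball a R := by simpa using hx
        have heq : u =ᶠ[nhds (a + x)] w :=
          Filter.eventuallyEq_of_mem (Metric.isOpen_ball.mem_nhds hax) huw'
        rw [Set.indicator_of_mem hx, Set.indicator_of_mem hax, heq.fderiv_eq, huw' _ hax, hv,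
          fderiv_comp_add_left]
      · have hax : a + x ∉ Metric.ball a R := by simpa using hx
        rw [Set.indicator_of_notMem hx, Set.indicator_of_notMem hax]
    rw [e1]
    refine ne_top_of_le_ne_top hfin ?_
    calc ∫⁻ x in Metric.ball a R, ENNReal.ofReal ((‖fderiv ℝ u x‖ / |u x|) ^ n)
        = ∫⁻ x in Metric.ball a R,
            (Metric.ball a R \ {x ∈ Ω | u x = 0}).indicator
              (fun x => ENNReal.ofReal ((‖fderiv ℝ u x‖ / |u x|) ^ n)) x := by
          refine setLIntegral_congr_fun measurableSet_ball fun x hx => ?_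
          by_cases hux : u x = 0
          · have : x ∉ Metric.ball a R \ {x ∈ Ω | u x = 0} :=
              fun h => h.2 ⟨hUΩ (hball hx).2, hux⟩
            simp [this, hux, show n ≠ 0 by omega]
          · have : x ∈ Metric.ball a R \ {x ∈ Ω | u x = 0} := ⟨hx, fun h => hux h.2⟩
            simp [this]
      _ ≤ ∫⁻ x in Metric.ball a R \ {x ∈ Ω | u x = 0},
            ENNReal.ofReal ((‖fderiv ℝ u x‖ / |u x|) ^ n) :=
          (setLIntegral_le_lintegral _ _).trans (lintegral_indicator_le _ _)
      _ ≤ _ := lintegral_mono_set (Set.sdiff_subset_sdiff_left fun x hx => (hball hx).2)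
  have hzero : ∀ x ∈ Metric.ball a R, u x = 0 := by
    intro x hx
    have := eq_zero_on_ball (by omega) hvL (by simpa [hv, huw' a hae] using hua) hvfin
      (x := x - a) (by simpa [dist_eq_norm] using hx)
    rw [huw' x hx]
    simpa [hv] using this
  refine haF.2 (mem_interior_iff_mem_nhds.2 (Filter.mem_of_superset (Metric.ball_mem_nhds a hR) ?_))
  exact fun x hx => ⟨hUΩ (hball hx).2, hzero x hx⟩
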